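/- For each positive integer n, there exists a constant Λ₀ > 1 with the following property. Define, for positive reals λ_1, …, λ_{2n} and a fully symmetric real 3-tensor h = (h_{ijk}) with indices in {1, …, 2n}, the quadratic form Q(λ, h) = Σ_{i,j,k} h_{ijk}² − 2 Σ_k Σ_{i odd} (h_{iik} h_{i'i'k} − h_{ii'k}²) − 2 Σ_k Σ_{i < j, j ≠ i'} (−1)^{i+j} λ_i λ_j (h_{i'ik} h_{j'jk} − h_{i'jk} h_{j'ik}). Then Q(λ, h) ≥ 0 for every h whenever 1/√Λ₀ ≤ λ_i ≤ √Λ₀ for all i; moreover, for every Λ₁ with 1 ≤ Λ₁ < Λ₀ there exists δ > 0 such that Q(λ, h) ≥ δ Σ_{i,j,k} h_{ijk}² for every h whenever 1/√Λ₁ ≤ λ_i ≤ √Λ₁ for all i. -/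

import Mathlib

/-!
At `λ = 1` the form is positive definite. Let `J` be the standard complex structure and
`A_k = (h_{ijk})_{ij}`. The double sum over `i < j`, `j ≠ i'` completes to a sum over all `i, j`,
in which the square of the trace of `J A_k` vanishes because `i` and `i'` carry opposite signs.
What remains is
`Q(1, h) = Σ_k (|A_k|² + tr (J A_k J A_k)) = ½ Σ d_{ijk}²`, where
`d(x, y, z) = h(x, y, z) - h(Jx, Jy, z)` (`Qform_one`).

If `T_{ab}` applies `J` in the slots `a` and `b`, then `T₁₂ T₂₃ = -T₁₃`, and hence
`2 h = d₁₂ + T₁₂ d₂₃ + d₁₃` with `d_{ab} = h - T_{ab} h`. For symmetric `h` the three summands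
have the same norm, so `4 |h|² ≤ 9 |d|²`, that is `Q(1, h) ≥ (2/9) |h|²`
(`sum_sq_le_Qform_one`).

Finally `|Q(λ, h) - Q(1, h)| ≤ 4 (2n)³ ε |h|²` if `|λ_i λ_j - 1| ≤ ε` for all `i, j`, and
`1/√Λ ≤ λ_i ≤ √Λ` gives `ε = Λ - 1`. With `Λ₀ = 1 + 1 / (36 (2n)³)` the bound
`Q ≥ (1/9) |h|²` holds up to and including `Λ₀`.
-/

open Finset

/-- The involution `i ↦ i'` on `Fin (2n)` (0-indexed: `i' = i+1` for even `i`,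
`i' = i−1` for odd `i`). -/
def pr (n : ℕ) (i : Fin (2 * n)) : Fin (2 * n) :=
  if _h : (i : ℕ) % 2 = 0 then ⟨(i : ℕ) + 1, by have := i.isLt; omega⟩
  else ⟨(i : ℕ) - 1, by have := i.isLt; omega⟩

/-- The quadratic form `Q(λ, h)` from the evolution equation of `*Ω`:
`Q(λ,h) = Σ h_{ijk}² − 2 Σ_k Σ_{i odd} (h_{iik} h_{i'i'k} − h_{ii'k}²)
 − 2 Σ_k Σ_{i<j, j≠i'} (−1)^{i+j} λ_i λ_j (h_{i'ik} h_{j'jk} − h_{i'jk} h_{j'ik})`.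
("odd" refers to the paper's 1-based indexing; the parity of `i+j` is the same in
both conventions.) -/
noncomputable def Qform (n : ℕ) (lam : Fin (2 * n) → ℝ)
    (h : Fin (2 * n) → Fin (2 * n) → Fin (2 * n) → ℝ) : ℝ :=
  (∑ i, ∑ j, ∑ k, h i j k ^ 2)
    - 2 * (∑ k, ∑ i ∈ univ.filter (fun i : Fin (2 * n) => (i : ℕ) % 2 = 0),
        (h i i k * h (pr n i) (pr n i) k - h i (pr n i) k ^ 2))
    - 2 * (∑ k, ∑ i, ∑ j ∈ univ.filter (fun j : Fin (2 * n) => i < j ∧ j ≠ pr n i),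
        (-1 : ℝ) ^ ((i : ℕ) + (j : ℕ)) * lam i * lam j *
          (h (pr n i) i k * h (pr n j) j k - h (pr n i) j k * h (pr n j) i k))

/-- The sign `(-1)^i` of an index: up to orientation, `J` has the entry `sgn i` at `(i, i')`. -/
noncomputable def sgn (n : ℕ) (i : Fin (2 * n)) : ℝ := (-1) ^ (i : ℕ)

/-- The defect `h(x, y, z) - h(Jx, Jy, z)` of invariance of `h` under the complex structure in its
first two slots. -/
noncomputable def defect (n : ℕ) (h : Fin (2 * n) → Fin (2 * n) → Fin (2 * n) → ℝ)
    (i j k : Fin (2 * n)) : ℝ :=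
  h i j k - sgn n i * sgn n j * h (pr n i) (pr n j) k

lemma pr_val (n : ℕ) (i : Fin (2 * n)) :
    ((pr n i : Fin (2 * n)) : ℕ) = if (i : ℕ) % 2 = 0 then (i : ℕ) + 1 else (i : ℕ) - 1 := by
  unfold pr
  split_ifs <;> rfl

lemma pr_pr (n : ℕ) (i : Fin (2 * n)) : pr n (pr n i) = i := by
  apply Fin.ext
  rw [pr_val, pr_val]
  split_ifs <;> omega

lemma pr_mod_two (n : ℕ) (i : Fin (2 * n)) :
    ((pr n i : Fin (2 * n)) : ℕ) % 2 = 0 ↔ ¬ (i : ℕ) % 2 = 0 := by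
  rw [pr_val]
  split_ifs <;> omega

lemma sgn_mul_self (n : ℕ) (i : Fin (2 * n)) : sgn n i * sgn n i = 1 := by
  unfold sgn
  rw [← mul_pow]
  norm_num

lemma sgn_pr (n : ℕ) (i : Fin (2 * n)) : sgn n (pr n i) = -sgn n i := by
  unfold sgn
  by_cases hi : (i : ℕ) % 2 = 0
  · rw [pr_val, if_pos hi, pow_succ]
    ring
  · obtain ⟨m, hm⟩ : ∃ m, (i : ℕ) = m + 1 := ⟨(i : ℕ) - 1, by omega⟩
    rw [pr_val, if_neg hi, hm, pow_succ, Nat.add_sub_cancel]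
    ring

lemma sum_pr (n : ℕ) (g : Fin (2 * n) → ℝ) : ∑ i, g (pr n i) = ∑ i, g i :=
  Equiv.sum_comp (Function.Involutive.toPerm (pr n) (pr_pr n)) g

lemma sum_even_of_pr_invariant (n : ℕ) (g : Fin (2 * n) → ℝ) (hg : ∀ i, g (pr n i) = g i) :
    ∑ i, g i = 2 * ∑ i ∈ univ.filter (fun i : Fin (2 * n) => (i : ℕ) % 2 = 0), g i := by
  have h1 : ∑ i ∈ univ.filter (fun i : Fin (2 * n) => ¬ (i : ℕ) % 2 = 0), g i
      = ∑ i ∈ univ.filter (fun i : Fin (2 * n) => (i : ℕ) % 2 = 0), g i := by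
    rw [Finset.sum_filter, Finset.sum_filter, ← sum_pr]
    refine Finset.sum_congr rfl fun i _ => ?_
    rw [hg]
    have := pr_mod_two n i
    by_cases hi : (i : ℕ) % 2 = 0 <;> simp_all
  rw [← Finset.sum_filter_add_sum_filter_not univ (fun i : Fin (2 * n) => (i : ℕ) % 2 = 0) g, h1]
  ring

/-- A double sum of a symmetric function vanishing on the diagonal, split into the pairs with
`j = i'` and twice the pairs `i < j` with `j ≠ i'`. -/
lemma sum_symm_split (n : ℕ) (F : Fin (2 * n) → Fin (2 * n) → ℝ)
    (hs : ∀ i j, F i j = F j i) (h0 : ∀ i, F i i = 0) :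
    ∑ i, ∑ j, F i j =
      2 * (∑ i, ∑ j ∈ univ.filter (fun j : Fin (2 * n) => i < j ∧ j ≠ pr n i), F i j)
        + ∑ i, F i (pr n i) := by
  have hsplit : ∀ i j, F i j = (if i < j ∧ j ≠ pr n i then F i j else 0)
      + (if j < i ∧ i ≠ pr n j then F j i else 0) + (if j = pr n i then F i j else 0) := by
    intro i j
    have hiff : i = pr n j ↔ j = pr n i :=
      ⟨fun h => by rw [h, pr_pr], fun h => by rw [h, pr_pr]⟩
    by_cases hj : j = pr n i
    · simp [hj, pr_pr]
    · have hi : ¬ i = pr n j := fun h => hj (hiff.1 h)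
      rcases lt_trichotomy i j with h | h | h
      · simp [hj, h, h.not_gt]
      · subst h
        simp [h0]
      · simp [hj, hi, h, h.not_gt, hs i j]
  have hsum : ∑ i, ∑ j, F i j = ∑ i, ∑ j, ((if i < j ∧ j ≠ pr n i then F i j else 0)
      + (if j < i ∧ i ≠ pr n j then F j i else 0) + (if j = pr n i then F i j else 0)) :=
    Finset.sum_congr rfl fun i _ => Finset.sum_congr rfl fun j _ => hsplit i j
  rw [hsum]
  simp only [Finset.sum_add_distrib, Finset.sum_filter]
  rw [Finset.sum_comm (f := fun i j => if j < i ∧ i ≠ pr n j then F j i else 0)]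
  simp only [Finset.sum_ite_eq', Finset.mem_univ, if_true]
  ring

/-- The matrix identity behind `Qform_one`, for a single slice `A = A_k`. -/
lemma slice_identity (n : ℕ) (A : Fin (2 * n) → Fin (2 * n) → ℝ) (hA : ∀ i j, A i j = A j i) :
    (∑ i, ∑ j, A i j ^ 2)
      - 2 * (∑ i ∈ univ.filter (fun i : Fin (2 * n) => (i : ℕ) % 2 = 0),
        (A i i * A (pr n i) (pr n i) - A i (pr n i) ^ 2))
      - 2 * (∑ i, ∑ j ∈ univ.filter (fun j : Fin (2 * n) => i < j ∧ j ≠ pr n i),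
        sgn n i * sgn n j * (A (pr n i) i * A (pr n j) j - A (pr n i) j * A (pr n j) i))
      = 1 / 2 * ∑ i, ∑ j, (A i j - sgn n i * sgn n j * A (pr n i) (pr n j)) ^ 2 := by
  have hsplit := sum_symm_split n
    (fun i j => sgn n i * sgn n j * (A (pr n i) i * A (pr n j) j - A (pr n i) j * A (pr n j) i))
    (fun i j => by ring) (fun i => by ring)
  have hdiag : ∑ i, sgn n i * sgn n (pr n i) * (A (pr n i) i * A (pr n (pr n i)) (pr n i)
        - A (pr n i) (pr n i) * A (pr n (pr n i)) i)
      = ∑ i, (A i i * A (pr n i) (pr n i) - A i (pr n i) ^ 2) := by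
    refine Finset.sum_congr rfl fun i _ => ?_
    rw [pr_pr, sgn_pr, hA (pr n i) i]
    linear_combination (A i i * A (pr n i) (pr n i) - A i (pr n i) ^ 2) * sgn_mul_self n i
  have heven := sum_even_of_pr_invariant n
    (fun i => A i i * A (pr n i) (pr n i) - A i (pr n i) ^ 2)
    (fun i => by simp only [pr_pr]; rw [hA (pr n i) i]; ring)
  have htrace : ∑ i, sgn n i * A (pr n i) i = 0 := by
    have h1 := sum_pr n (fun i => sgn n i * A (pr n i) i)
    have h2 : ∑ i, sgn n (pr n i) * A (pr n (pr n i)) (pr n i)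
        = -∑ i, sgn n i * A (pr n i) i := by
      rw [← Finset.sum_neg_distrib]
      refine Finset.sum_congr rfl fun i _ => ?_
      rw [pr_pr, sgn_pr, hA i (pr n i)]
      ring
    linarith
  have hfull : ∑ i, ∑ j, sgn n i * sgn n j
        * (A (pr n i) i * A (pr n j) j - A (pr n i) j * A (pr n j) i)
      = -∑ i, ∑ j, sgn n i * sgn n j * (A (pr n i) j * A (pr n j) i) := by
    have h1 : ∑ i, ∑ j, sgn n i * sgn n j * (A (pr n i) i * A (pr n j) j) = 0 := by
      calc _ = (∑ i, sgn n i * A (pr n i) i) * ∑ j, sgn n j * A (pr n j) j := by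
            rw [Finset.sum_mul_sum]
            exact Finset.sum_congr rfl fun i _ => Finset.sum_congr rfl fun j _ => by ring
        _ = 0 := by rw [htrace, zero_mul]
    simp only [mul_sub, Finset.sum_sub_distrib] at h1 ⊢
    rw [h1, zero_sub]
  -- Reindexing by `i ↦ i'` turns `tr (J A J A)` into the cross term of the square.
  have hcross : ∑ i, ∑ j, sgn n i * sgn n j * (A (pr n i) j * A (pr n j) i)
      = -∑ i, ∑ j, sgn n i * sgn n j * (A i j * A (pr n i) (pr n j)) := by
    rw [← sum_pr, ← Finset.sum_neg_distrib]
    refine Finset.sum_congr rfl fun i _ => ?_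
    rw [← Finset.sum_neg_distrib]
    refine Finset.sum_congr rfl fun j _ => ?_
    rw [pr_pr, sgn_pr, hA (pr n j) (pr n i)]
    ring
  have hnorm : ∑ i, ∑ j, A (pr n i) (pr n j) ^ 2 = ∑ i, ∑ j, A i j ^ 2 := by
    rw [sum_pr n (fun i => ∑ j, A i (pr n j) ^ 2)]
    exact Finset.sum_congr rfl fun i _ => sum_pr n (fun j => A i j ^ 2)
  have hsq : ∑ i, ∑ j, (A i j - sgn n i * sgn n j * A (pr n i) (pr n j)) ^ 2
      = (∑ i, ∑ j, A i j ^ 2) + (∑ i, ∑ j, A (pr n i) (pr n j) ^ 2)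
        - 2 * ∑ i, ∑ j, sgn n i * sgn n j * (A i j * A (pr n i) (pr n j)) := by
    simp only [Finset.mul_sum, ← Finset.sum_add_distrib, ← Finset.sum_sub_distrib]
    refine Finset.sum_congr rfl fun i _ => Finset.sum_congr rfl fun j _ => ?_
    linear_combination (A (pr n i) (pr n j) ^ 2 * (sgn n j * sgn n j)) * sgn_mul_self n i
      + A (pr n i) (pr n j) ^ 2 * sgn_mul_self n j
  linarith

lemma sum_rotate {ι : Type*} [Fintype ι] (f : ι → ι → ι → ℝ) :
    ∑ i, ∑ j, ∑ k, f i j k = ∑ k, ∑ i, ∑ j, f i j k := by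
  calc _ = ∑ i, ∑ k, ∑ j, f i j k := Finset.sum_congr rfl fun i _ => Finset.sum_comm
    _ = _ := Finset.sum_comm

lemma Qform_one (n : ℕ) (h : Fin (2 * n) → Fin (2 * n) → Fin (2 * n) → ℝ)
    (h12 : ∀ i j k, h i j k = h j i k) :
    Qform n (fun _ => 1) h = 1 / 2 * ∑ i, ∑ j, ∑ k, defect n h i j k ^ 2 := by
  unfold Qform defect
  rw [sum_rotate (fun i j k => h i j k ^ 2), sum_rotate (fun i j k => (h i j k -
    sgn n i * sgn n j * h (pr n i) (pr n j) k) ^ 2), Finset.mul_sum, Finset.mul_sum,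
    Finset.mul_sum, ← Finset.sum_sub_distrib, ← Finset.sum_sub_distrib]
  refine Finset.sum_congr rfl fun k _ => ?_
  rw [← slice_identity n (fun i j => h i j k) (fun i j => h12 i j k)]
  simp only [pow_add, mul_one, sgn]

lemma sum_sq_le_Qform_one (n : ℕ) (h : Fin (2 * n) → Fin (2 * n) → Fin (2 * n) → ℝ)
    (h12 : ∀ i j k, h i j k = h j i k) (h23 : ∀ i j k, h i j k = h i k j) :
    2 / 9 * ∑ i, ∑ j, ∑ k, h i j k ^ 2 ≤ Qform n (fun _ => 1) h := by
  rw [Qform_one n h h12]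
  -- This is `2 h = d₁₂ + T₁₂ d₂₃ + d₁₃`, the last two written through `d₁₂` by symmetry of `h`.
  have hdecomp : ∀ i j k, 2 * h i j k = defect n h i j k
      + sgn n i * sgn n j * defect n h (pr n j) k (pr n i) + defect n h i k j := by
    intro i j k
    unfold defect
    rw [pr_pr, sgn_pr, h23 i k j, h12 (pr n j) k (pr n i), h23 k (pr n j) (pr n i),
      h12 k (pr n i) (pr n j), h23 (pr n i) k (pr n j), h23 j (pr n k) (pr n i),
      h12 j (pr n i) (pr n k), h23 (pr n i) j (pr n k)]
    linear_combination (-sgn n i * sgn n k * h (pr n i) (pr n k) j) * sgn_mul_self n j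
  have hpt : ∀ i j k, 4 * h i j k ^ 2 ≤ 3 * (defect n h i j k ^ 2
      + defect n h (pr n j) k (pr n i) ^ 2 + defect n h i k j ^ 2) := by
    intro i j k
    have e := hdecomp i j k
    have hs : (sgn n i * sgn n j * defect n h (pr n j) k (pr n i)) ^ 2
        = defect n h (pr n j) k (pr n i) ^ 2 := by
      linear_combination (defect n h (pr n j) k (pr n i) ^ 2 * (sgn n j * sgn n j))
        * sgn_mul_self n i + defect n h (pr n j) k (pr n i) ^ 2 * sgn_mul_self n j
    have e4 : 4 * h i j k ^ 2 = (2 * h i j k) ^ 2 := by ring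
    rw [← hs, e4, e]
    generalize defect n h i j k = a
    generalize sgn n i * sgn n j * defect n h (pr n j) k (pr n i) = b
    generalize defect n h i k j = c
    nlinarith [sq_nonneg (a - b), sq_nonneg (b - c), sq_nonneg (a - c)]
  have hsum : ∑ i, ∑ j, ∑ k, 4 * h i j k ^ 2 ≤ ∑ i, ∑ j, ∑ k, 3 * (defect n h i j k ^ 2
      + defect n h (pr n j) k (pr n i) ^ 2 + defect n h i k j ^ 2) :=
    Finset.sum_le_sum fun i _ => Finset.sum_le_sum fun j _ => Finset.sum_le_sum fun k _ => hpt i j k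
  have hT : ∑ i, ∑ j, ∑ k, defect n h (pr n j) k (pr n i) ^ 2
      = ∑ i, ∑ j, ∑ k, defect n h i j k ^ 2 := by
    rw [sum_pr n (fun i => ∑ j, ∑ k, defect n h (pr n j) k i ^ 2),
      sum_rotate (fun i j k => defect n h i j k ^ 2)]
    exact Finset.sum_congr rfl fun i _ => sum_pr n (fun j => ∑ k, defect n h j k i ^ 2)
  have hC : ∑ i, ∑ j, ∑ k, defect n h i k j ^ 2 = ∑ i, ∑ j, ∑ k, defect n h i j k ^ 2 :=
    Finset.sum_congr rfl fun i _ => Finset.sum_comm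
  simp only [← Finset.mul_sum, Finset.sum_add_distrib] at hsum
  rw [hT, hC] at hsum
  linarith

lemma sq_le_sum_sq {ι : Type*} [Fintype ι] (h : ι → ι → ι → ℝ) (a b c : ι) :
    h a b c ^ 2 ≤ ∑ i, ∑ j, ∑ k, h i j k ^ 2 := by
  calc h a b c ^ 2 ≤ ∑ k, h a b k ^ 2 :=
        Finset.single_le_sum (f := fun k => h a b k ^ 2) (fun k _ => sq_nonneg _)
          (Finset.mem_univ c)
    _ ≤ ∑ j, ∑ k, h a j k ^ 2 :=
        Finset.single_le_sum (f := fun j => ∑ k, h a j k ^ 2)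
          (fun j _ => Finset.sum_nonneg fun k _ => sq_nonneg _) (Finset.mem_univ b)
    _ ≤ _ :=
        Finset.single_le_sum (f := fun i => ∑ j, ∑ k, h i j k ^ 2)
          (fun i _ => Finset.sum_nonneg fun j _ => Finset.sum_nonneg fun k _ => sq_nonneg _)
          (Finset.mem_univ a)

/-- Perturbation bound: each of the at most `(2n)³` terms changes by at most `2 ε |h|²`. -/
lemma Qform_one_sub_le (n : ℕ) (lam : Fin (2 * n) → ℝ)
    (h : Fin (2 * n) → Fin (2 * n) → Fin (2 * n) → ℝ) (ε : ℝ)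
    (hlam : ∀ i j, |lam i * lam j - 1| ≤ ε) :
    Qform n (fun _ => 1) h - Qform n lam h
      ≤ 4 * ((2 * n : ℕ) : ℝ) ^ 3 * ε * ∑ i, ∑ j, ∑ k, h i j k ^ 2 := by
  set S := ∑ i, ∑ j, ∑ k, h i j k ^ 2 with hS
  have hprod : ∀ a b c a' b' c', |h a b c * h a' b' c'| ≤ S := by
    intro a b c a' b' c'
    have h1 := sq_le_sum_sq h a b c
    have h2 := sq_le_sum_sq h a' b' c'
    rw [abs_le]
    constructor
    · nlinarith [sq_nonneg (h a b c + h a' b' c')]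
    · nlinarith [sq_nonneg (h a b c - h a' b' c')]
  have hterm : ∀ i j k : Fin (2 * n), (-1 : ℝ) ^ ((i : ℕ) + (j : ℕ)) * lam i * lam j *
          (h (pr n i) i k * h (pr n j) j k - h (pr n i) j k * h (pr n j) i k)
        - (-1 : ℝ) ^ ((i : ℕ) + (j : ℕ)) * 1 * 1 *
          (h (pr n i) i k * h (pr n j) j k - h (pr n i) j k * h (pr n j) i k)
      ≤ 2 * ε * S := by
    intro i j k
    have hX : |h (pr n i) i k * h (pr n j) j k - h (pr n i) j k * h (pr n j) i k| ≤ 2 * S := by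
      have := abs_sub (h (pr n i) i k * h (pr n j) j k) (h (pr n i) j k * h (pr n j) i k)
      linarith [hprod (pr n i) i k (pr n j) j k, hprod (pr n i) j k (pr n j) i k]
    calc _ = (-1 : ℝ) ^ ((i : ℕ) + (j : ℕ)) * ((lam i * lam j - 1) *
            (h (pr n i) i k * h (pr n j) j k - h (pr n i) j k * h (pr n j) i k)) := by ring
      _ ≤ |(-1 : ℝ) ^ ((i : ℕ) + (j : ℕ)) * ((lam i * lam j - 1) *
            (h (pr n i) i k * h (pr n j) j k - h (pr n i) j k * h (pr n j) i k))| := le_abs_self _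
      _ = |lam i * lam j - 1| *
            |h (pr n i) i k * h (pr n j) j k - h (pr n i) j k * h (pr n j) i k| := by
          rw [abs_mul, abs_mul, abs_pow, abs_neg, abs_one, one_pow, one_mul]
      _ ≤ ε * (2 * S) :=
          mul_le_mul (hlam i j) hX (abs_nonneg _) ((abs_nonneg _).trans (hlam i j))
      _ = 2 * ε * S := by ring
  have hSnn : 0 ≤ S := Finset.sum_nonneg fun i _ => Finset.sum_nonneg fun j _ =>
    Finset.sum_nonneg fun k _ => sq_nonneg _
  clear_value S
  have hbound : (∑ k, ∑ i, ∑ j ∈ univ.filter (fun j : Fin (2 * n) => i < j ∧ j ≠ pr n i),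
        ((-1 : ℝ) ^ ((i : ℕ) + (j : ℕ)) * lam i * lam j *
          (h (pr n i) i k * h (pr n j) j k - h (pr n i) j k * h (pr n j) i k)
        - (-1 : ℝ) ^ ((i : ℕ) + (j : ℕ)) * 1 * 1 *
          (h (pr n i) i k * h (pr n j) j k - h (pr n i) j k * h (pr n j) i k)))
      ≤ ∑ _k : Fin (2 * n), ∑ _i : Fin (2 * n), ∑ _j : Fin (2 * n), 2 * ε * S := by
    refine Finset.sum_le_sum fun k _ => Finset.sum_le_sum fun i _ => ?_
    refine (Finset.sum_le_sum fun j _ => hterm i j k).trans ?_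
    refine Finset.sum_le_sum_of_subset_of_nonneg (Finset.filter_subset _ _) fun j _ _ => ?_
    have hε : 0 ≤ ε := (abs_nonneg _).trans (hlam i j)
    exact mul_nonneg (mul_nonneg zero_le_two hε) hSnn
  simp only [Finset.sum_sub_distrib] at hbound
  simp only [Finset.sum_const, Finset.card_univ, Fintype.card_fin, nsmul_eq_mul] at hbound
  unfold Qform
  linarith

lemma abs_mul_sub_one_le {Λ x y : ℝ} (hΛ : 1 ≤ Λ)
    (hx : 1 / Real.sqrt Λ ≤ x ∧ x ≤ Real.sqrt Λ) (hy : 1 / Real.sqrt Λ ≤ y ∧ y ≤ Real.sqrt Λ) :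
    |x * y - 1| ≤ Λ - 1 := by
  have hpos : 0 < Real.sqrt Λ := Real.sqrt_pos.2 (by linarith)
  have hinv : 0 < 1 / Real.sqrt Λ := by positivity
  have hsq : Real.sqrt Λ * Real.sqrt Λ = Λ := Real.mul_self_sqrt (by linarith)
  have hup : x * y ≤ Λ := by
    rw [← hsq]
    exact mul_le_mul hx.2 hy.2 (hinv.le.trans hy.1) hpos.le
  have hlow : 1 / Λ ≤ x * y := by
    have h1 : 1 / Λ = 1 / Real.sqrt Λ * (1 / Real.sqrt Λ) := by
      rw [div_mul_div_comm, hsq, one_mul]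
    rw [h1]
    exact mul_le_mul hx.1 hy.1 hinv.le (hinv.le.trans hx.1)
  have hlow2 : 2 - Λ ≤ 1 / Λ := by
    rw [le_div_iff₀ (by linarith)]
    nlinarith [sq_nonneg (Λ - 1)]
  rw [abs_le]
  constructor <;> linarith

/-- For each positive integer `n` there is `Λ₀ > 1` such that `Q(λ, h) ≥ 0`
for every fully symmetric `h` whenever `1/√Λ₀ ≤ λ_i ≤ √Λ₀`, and for every
`1 ≤ Λ₁ < Λ₀` there is `δ > 0` with `Q(λ, h) ≥ δ Σ h_{ijk}²` whenever
`1/√Λ₁ ≤ λ_i ≤ √Λ₁`. -/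
theorem exists_pinching_constant (n : ℕ) (hn : 0 < n) :
    ∃ Λ₀ : ℝ, 1 < Λ₀ ∧
      (∀ (lam : Fin (2 * n) → ℝ) (h : Fin (2 * n) → Fin (2 * n) → Fin (2 * n) → ℝ),
        (∀ i j k, h i j k = h j i k) → (∀ i j k, h i j k = h i k j) →
        (∀ i, 0 < lam i) →
        (∀ i, 1 / Real.sqrt Λ₀ ≤ lam i ∧ lam i ≤ Real.sqrt Λ₀) →
        0 ≤ Qform n lam h) ∧
      (∀ Λ₁ : ℝ, 1 ≤ Λ₁ → Λ₁ < Λ₀ → ∃ δ : ℝ, 0 < δ ∧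
        ∀ (lam : Fin (2 * n) → ℝ) (h : Fin (2 * n) → Fin (2 * n) → Fin (2 * n) → ℝ),
          (∀ i j k, h i j k = h j i k) → (∀ i j k, h i j k = h i k j) →
          (∀ i, 0 < lam i) →
          (∀ i, 1 / Real.sqrt Λ₁ ≤ lam i ∧ lam i ≤ Real.sqrt Λ₁) →
          δ * (∑ i, ∑ j, ∑ k, h i j k ^ 2) ≤ Qform n lam h) := by
  have hN : (0 : ℝ) < ((2 * n : ℕ) : ℝ) ^ 3 := by
    have : (0 : ℝ) < ((2 * n : ℕ) : ℝ) := by exact_mod_cast (by omega : 0 < 2 * n)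
    positivity
  have hstep : 0 < 1 / (36 * ((2 * n : ℕ) : ℝ) ^ 3) := by positivity
  have main : ∀ Λ : ℝ, 1 ≤ Λ → Λ ≤ 1 + 1 / (36 * ((2 * n : ℕ) : ℝ) ^ 3) →
      ∀ (lam : Fin (2 * n) → ℝ) (h : Fin (2 * n) → Fin (2 * n) → Fin (2 * n) → ℝ),
        (∀ i j k, h i j k = h j i k) → (∀ i j k, h i j k = h i k j) →
        (∀ i, 1 / Real.sqrt Λ ≤ lam i ∧ lam i ≤ Real.sqrt Λ) →
        1 / 9 * (∑ i, ∑ j, ∑ k, h i j k ^ 2) ≤ Qform n lam h := by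
    intro Λ h1 h2 lam h h12 h23 hlam
    have hone := sum_sq_le_Qform_one n h h12 h23
    have hpert := Qform_one_sub_le n lam h (1 / (36 * ((2 * n : ℕ) : ℝ) ^ 3))
      (fun i j => (abs_mul_sub_one_le h1 (hlam i) (hlam j)).trans (by linarith))
    have hc : 4 * ((2 * n : ℕ) : ℝ) ^ 3 * (1 / (36 * ((2 * n : ℕ) : ℝ) ^ 3)) = 1 / 9 := by
      generalize ((2 * n : ℕ) : ℝ) ^ 3 = N at hN
      field_simp
      norm_num
    rw [hc] at hpert
    linarith
  refine ⟨1 + 1 / (36 * ((2 * n : ℕ) : ℝ) ^ 3), by linarith, ?_, ?_⟩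
  · intro lam h h12 h23 _ hlam
    refine le_trans ?_ (main _ (by linarith) le_rfl lam h h12 h23 hlam)
    exact mul_nonneg (by norm_num) (Finset.sum_nonneg fun i _ => Finset.sum_nonneg fun j _ =>
      Finset.sum_nonneg fun k _ => sq_nonneg _)
  · intro Λ₁ h1 h2
    exact ⟨1 / 9, by norm_num, fun lam h h12 h23 _ hlam => main Λ₁ h1 h2.le lam h h12 h23 hlam⟩
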